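/- Let Ω ⊆ ℂⁿ be a convex open set. Then the holomorphic polynomials are dense in O(Ω) for the topology of uniform convergence on compact sets: for every holomorphic function f on Ω, every compact set L ⊆ Ω, and every ε > 0, there exists a holomorphic polynomial Q on ℂⁿ with sup_{z ∈ L} ‖f(z) − Q(z)‖ < ε. -/

import Mathlib

open Set Filter Topology

noncomputable section

/-- Evaluation of a multivariate polynomial as a function on `ℂⁿ = Fin n → ℂ`. -/
def mvEval {n : ℕ} (p : MvPolynomial (Fin n) ℂ) : (Fin n → ℂ) → ℂ :=
  fun z => MvPolynomial.eval z p

/-- The polynomially convex hull of a set in `ℂⁿ`. -/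
def polyHull {n : ℕ} (K : Set (Fin n → ℂ)) : Set (Fin n → ℂ) :=
  {z | ∀ p : MvPolynomial (Fin n) ℂ, ‖mvEval p z‖ ≤ sSup ((fun w => ‖mvEval p w‖) '' K)}

/-- A set in `ℂⁿ` is polynomially convex if it equals its polynomially convex hull. -/
def IsPolyConvex {n : ℕ} (K : Set (Fin n → ℂ)) : Prop := polyHull K = K

/-- The polynomially convex hull of a subset of `ℂ`. -/
def polyHull1 (F : Set ℂ) : Set ℂ :=
  {z | ∀ p : Polynomial ℂ, ‖p.eval z‖ ≤ sSup ((fun w => ‖p.eval w‖) '' F)}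

/-- A subset of `ℂ` is polynomially convex if it equals its polynomially convex hull. -/
def IsPolyConvex1 (F : Set ℂ) : Prop := polyHull1 F = F

/-- Partial derivative in the `i`-th coordinate direction. -/
def pd {n : ℕ} (i : Fin n) (f : (Fin n → ℂ) → ℂ) : (Fin n → ℂ) → ℂ :=
  fun z => fderiv ℂ f z (Pi.single i 1)

/-- Iterated partial derivative `D^ℓ = ∂^{ℓ₁+⋯+ℓₙ}/∂z₁^{ℓ₁}⋯∂zₙ^{ℓₙ}`. -/
def Dml {n : ℕ} (ℓ : Fin n → ℕ) (f : (Fin n → ℂ) → ℂ) : (Fin n → ℂ) → ℂ :=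
  (List.finRange n).foldr (fun i g => (pd i)^[ℓ i] g) f

/-- Partial sums `S_λ` of a Taylor-type series around `ζ`, with coefficients computed from a
given family `g` of (extended) partial derivatives: the coefficient of the monomial
`(z-ζ)^{N_j}` is `g (N_j) ζ / (N_{j,1}! ⋯ N_{j,n}!)`. -/
def pSumExt {n : ℕ} (Nj : ℕ → Fin n → ℕ) (g : (Fin n → ℕ) → (Fin n → ℂ) → ℂ)
    (ζ : Fin n → ℂ) (lam : ℕ) : (Fin n → ℂ) → ℂ :=
  fun z => ∑ j ∈ Finset.range (lam + 1),
    (((∏ i, Nat.factorial (Nj j i) : ℕ) : ℂ))⁻¹ * g (Nj j) ζ * ∏ i, (z i - ζ i) ^ (Nj j i)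

/-- Partial sums `S_λ(f,ζ)` of the Taylor development of `f` around `ζ`. -/
def pSum {n : ℕ} (Nj : ℕ → Fin n → ℕ) (f : (Fin n → ℂ) → ℂ)
    (ζ : Fin n → ℂ) (lam : ℕ) : (Fin n → ℂ) → ℂ :=
  pSumExt Nj (fun ℓ => Dml ℓ f) ζ lam

/-- The space `O(Ω)` of holomorphic functions on `Ω`. -/
def Ospace (n : ℕ) (Ω : Set (Fin n → ℂ)) : Type :=
  {f : (Fin n → ℂ) → ℂ // DifferentiableOn ℂ f Ω}

/-- Topology of uniform convergence on compact subsets of `Ω` on `O(Ω)` (the compact-open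
topology induced via restriction to `Ω`). -/
instance (n : ℕ) (Ω : Set (Fin n → ℂ)) : TopologicalSpace (Ospace n Ω) :=
  TopologicalSpace.induced
    (fun f : Ospace n Ω =>
      (⟨Ω.restrict f.1, continuousOn_iff_continuous_restrict.mp f.2.continuousOn⟩ : C(Ω, ℂ)))
    inferInstance

/-- Membership in `A^∞(Ω)`: `f` is holomorphic on `Ω` and each partial derivative `D^ℓ f`
extends continuously to the closure of `Ω`. -/
def AinfMem (n : ℕ) (Ω : Set (Fin n → ℂ)) (f : (Fin n → ℂ) → ℂ) : Prop :=
  DifferentiableOn ℂ f Ω ∧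
    ∀ ℓ : Fin n → ℕ, ∃ g : (Fin n → ℂ) → ℂ,
      ContinuousOn g (closure Ω) ∧ Set.EqOn g (Dml ℓ f) Ω

/-- The space `A^∞(Ω)`. -/
def AinfSpace (n : ℕ) (Ω : Set (Fin n → ℂ)) : Type :=
  {f : (Fin n → ℂ) → ℂ // AinfMem n Ω f}

/-- The chosen continuous extension of `D^ℓ f` to the closure of `Ω`, for `f ∈ A^∞(Ω)`.
(Its restriction to the closure of `Ω` is uniquely determined.) -/
def AinfExt {n : ℕ} {Ω : Set (Fin n → ℂ)} (f : AinfSpace n Ω) (ℓ : Fin n → ℕ) :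
    (Fin n → ℂ) → ℂ :=
  Classical.choose (f.2.2 ℓ)

lemma AinfExt_continuousOn {n : ℕ} {Ω : Set (Fin n → ℂ)} (f : AinfSpace n Ω) (ℓ : Fin n → ℕ) :
    ContinuousOn (AinfExt f ℓ) (closure Ω) :=
  (Classical.choose_spec (f.2.2 ℓ)).1

lemma AinfExt_eqOn {n : ℕ} {Ω : Set (Fin n → ℂ)} (f : AinfSpace n Ω) (ℓ : Fin n → ℕ) :
    Set.EqOn (AinfExt f ℓ) (Dml ℓ f.1) Ω :=
  (Classical.choose_spec (f.2.2 ℓ)).2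

/-- Topology on `A^∞(Ω)`: uniform convergence of every partial derivative on every compact
subset of the closure of `Ω`. -/
instance (n : ℕ) (Ω : Set (Fin n → ℂ)) : TopologicalSpace (AinfSpace n Ω) :=
  TopologicalSpace.induced
    (fun f : AinfSpace n Ω => fun ℓ : Fin n → ℕ =>
      (⟨(closure Ω).restrict (AinfExt f ℓ),
        continuousOn_iff_continuous_restrict.mp (AinfExt_continuousOn f ℓ)⟩ :
          C(closure Ω, ℂ)))
    inferInstance

/-- A smooth compact curve in `ℂⁿ`: the image of an injective `C^∞` map with
nowhere-vanishing derivative, defined on a compact interval (an arc) or on the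
circle (a closed curve, modelled by a 1-periodic map). -/
def IsSmoothCompactCurve {n : ℕ} (K : Set (Fin n → ℂ)) : Prop :=
  ∃ γ : ℝ → (Fin n → ℂ), ContDiff ℝ (⊤ : ℕ∞) γ ∧ (∀ t, deriv γ t ≠ 0) ∧ K = γ '' Set.Icc 0 1 ∧
    (Set.InjOn γ (Set.Icc 0 1) ∨ (Function.Periodic γ 1 ∧ Set.InjOn γ (Set.Ico 0 1)))

/-- A disjoint union of finitely many smooth compact curves. -/
def IsFiniteUnionOfSmoothCurves {n : ℕ} (K : Set (Fin n → ℂ)) : Prop :=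
  ∃ (m : ℕ) (C : Fin m → Set (Fin n → ℂ)),
    (∀ i, IsSmoothCompactCurve (C i)) ∧ Pairwise (Function.onFun Disjoint C) ∧ K = ⋃ i, C i

/-!
Let `P(L)` be the closure of the polynomials in `C(L)`, and let `Ω` be star-shaped about `x₀`.
The dilates `G t = (z ↦ f (x₀ + t (z - x₀)))` form a holomorphic `C(L)`-valued function on a
neighbourhood of `[0, 1]` in `ℂ`. For `t` near `0` the dilated copy of `L` lies in a polydisc
about `x₀` inside `Ω`, where `f` can be expanded in a Taylor series one variable at a time, so
`G t ∈ P(L)`. The identity theorem in the quotient `C(L) / P(L)` then propagates membership along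
`[0, 1]`, and `G 1` is the restriction of `f` to `L`.
-/

section VectorValuedHolomorphy

variable {X E : Type*} [TopologicalSpace X] [CompactSpace X]
  [NormedAddCommGroup E] [NormedSpace ℂ E] [CompleteSpace E]

lemma circleIntegral_continuousMap_apply {G : ℂ → C(X, E)} {c : ℂ} {R : ℝ}
    (hG : CircleIntegrable G c R) (x : X) :
    (∮ z in C(c, R), G z) x = ∮ z in C(c, R), G z x :=
  (ContinuousLinearMap.intervalIntegral_comp_comm (ContinuousMap.evalCLM ℂ x) hG.out).symm

lemma two_pi_I_inv_smul_circleIntegral_sub_inv_smul_continuousMap {G : ℂ → C(X, E)} {c w : ℂ}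
    {R : ℝ} (hG : ContinuousOn G (Metric.closedBall c R))
    (hGx : ∀ x, DifferentiableOn ℂ (fun t => G t x) (Metric.ball c R))
    (hw : w ∈ Metric.ball c R) :
    (2 * Real.pi * Complex.I : ℂ)⁻¹ • ∮ z in C(c, R), (z - w)⁻¹ • G z = G w := by
  have hR : 0 < R := Metric.pos_of_mem_ball hw
  have hkernel : ContinuousOn (fun z => (z - w)⁻¹ • G z) (Metric.sphere c R) := by
    refine ContinuousOn.smul ((continuousOn_id.sub continuousOn_const).inv₀ fun z hz => ?_)
      (hG.mono Metric.sphere_subset_closedBall)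
    exact sub_ne_zero.mpr (Metric.sphere_disjoint_ball.ne_of_mem hz hw)
  ext x
  have hcl : DiffContOnCl ℂ (fun t => G t x) (Metric.ball c R) :=
    DiffContOnCl.mk_ball (hGx x)
      ((ContinuousMap.evalCLM ℂ x : C(X, E) →L[ℂ] E).continuous.comp_continuousOn hG)
  rw [ContinuousMap.smul_apply,
    circleIntegral_continuousMap_apply (hkernel.circleIntegrable hR.le)]
  exact hcl.two_pi_i_inv_smul_circleIntegral_sub_inv_smul hw

lemma differentiableOn_continuousMap_of_apply {V : Set ℂ} (hV : IsOpen V) {G : ℂ → C(X, E)}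
    (hG : ContinuousOn G V) (hGx : ∀ x, DifferentiableOn ℂ (fun t => G t x) V) :
    DifferentiableOn ℂ G V := by
  intro c hc
  obtain ⟨R, hR, hRV⟩ := Metric.nhds_basis_closedBall.mem_iff.mp (hV.mem_nhds hc)
  lift R to NNReal using hR.le
  have hGR : ContinuousOn G (Metric.closedBall c R) := hG.mono hRV
  have hCauchy := hasFPowerSeriesOn_cauchy_integral
    ((hGR.mono Metric.sphere_subset_closedBall).circleIntegrable R.coe_nonneg)
    (NNReal.coe_pos.mp hR)
  refine (hCauchy.analyticAt.congr ?_).differentiableAt.differentiableWithinAt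
  filter_upwards [Metric.ball_mem_nhds c hR] with w hw
  exact two_pi_I_inv_smul_circleIntegral_sub_inv_smul_continuousMap hGR
    (fun x => (hGx x).mono (Metric.ball_subset_closedBall.trans hRV)) hw

lemma exists_differentiableOn_continuousMap_comp {F : Type*} [NormedAddCommGroup F]
    [NormedSpace ℂ F] {Ω : Set F} {f : F → E} (hf : DifferentiableOn ℂ f Ω)
    {V : Set ℂ} (hV : IsOpen V) {m : ℂ → X → F} (hm : Continuous (Function.uncurry m))
    (hmx : ∀ x, Differentiable ℂ fun t => m t x) (hmΩ : ∀ t ∈ V, ∀ x, m t x ∈ Ω) :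
    ∃ G : ℂ → C(X, E), DifferentiableOn ℂ G V ∧ ∀ t ∈ V, ∀ x, G t x = f (m t x) := by
  have hcont : ContinuousOn (Function.uncurry fun t x => f (m t x)) (V ×ˢ univ) :=
    hf.continuousOn.comp hm.continuousOn fun p hp => hmΩ p.1 hp.1 p.2
  have happly : ∀ t ∈ V, ∀ x, ContinuousMap.mkD (fun x => f (m t x)) 0 x = f (m t x) :=
    fun t ht x => ContinuousMap.mkD_apply_of_continuous <|
      hcont.comp_continuous (Continuous.prodMk_right t) fun _ => ⟨ht, mem_univ _⟩
  refine ⟨fun t => ContinuousMap.mkD (fun x => f (m t x)) 0, ?_, happly⟩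
  refine differentiableOn_continuousMap_of_apply hV
    (ContinuousMap.continuousOn_mkD_of_uncurry _ 0 hcont) fun x => ?_
  exact (hf.comp (hmx x).differentiableOn fun t ht => hmΩ t ht x).congr
    fun t ht => happly t ht x

end VectorValuedHolomorphy

section ClosedSubmodule

variable {𝕜 E : Type*} [NontriviallyNormedField 𝕜] [NormedAddCommGroup E] [NormedSpace 𝕜 E]
  {W : Submodule 𝕜 E}

lemma coeff_mem_of_eventually_mem (hW : IsClosed (W : Set E)) {f : 𝕜 → E}
    {p : FormalMultilinearSeries 𝕜 𝕜 E} {c : 𝕜} (hf : HasFPowerSeriesAt f p c)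
    (hfW : ∀ᶠ t in 𝓝 c, f t ∈ W) (n : ℕ) : p.coeff n ∈ W := by
  have : IsClosed (W : Set E) := hW
  obtain ⟨r, hr⟩ := hf
  have hquot : HasFPowerSeriesAt (W.mkQL ∘ f) (W.mkQL.compFormalMultilinearSeries p) c :=
    ⟨r, W.mkQL.comp_hasFPowerSeriesOnBall hr⟩
  have hzero := hquot.eq_zero_of_eventually
    (hfW.mono fun _ ht => (Submodule.Quotient.mk_eq_zero W).mpr ht)
  exact (Submodule.Quotient.mk_eq_zero W).mp
    (FormalMultilinearSeries.coeff_eq_zero.mpr (congrFun hzero n))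

lemma mem_of_eventually_mem_of_isPreconnected {F : Type*} [NormedAddCommGroup F]
    [NormedSpace 𝕜 F] (hW : IsClosed (W : Set E)) {G : F → E} {U : Set F}
    (hG : AnalyticOnNhd 𝕜 G U) (hU : IsPreconnected U) {c : F} (hc : c ∈ U)
    (hGW : ∀ᶠ t in 𝓝 c, G t ∈ W) {t : F} (ht : t ∈ U) : G t ∈ W := by
  have : IsClosed (W : Set E) := hW
  have hquot : AnalyticOnNhd 𝕜 (W.mkQL ∘ G) U := W.mkQL.comp_analyticOnNhd hG
  have hzero : W.mkQL (G t) = 0 := hquot.eqOn_zero_of_preconnected_of_eventuallyEq_zero hU hc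
    (hGW.mono fun _ hs => (Submodule.Quotient.mk_eq_zero W).mpr hs) ht
  exact (Submodule.Quotient.mk_eq_zero W).mp hzero

end ClosedSubmodule

section HolomorphicFunctionalCalculus

variable {X : Type*} [TopologicalSpace X] [CompactSpace X]

lemma hasSum_pow_mul_coeff {𝕜 : Type*} [NontriviallyNormedField 𝕜] [CompleteSpace 𝕜]
    {H : 𝕜 → C(X, 𝕜)} {p : FormalMultilinearSeries 𝕜 𝕜 C(X, 𝕜)} {c : 𝕜} {r : ENNReal}
    (hH : HasFPowerSeriesOnBall H p c r) {v : C(X, 𝕜)} (hv : (‖v‖₊ : ENNReal) < r)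
    {g : C(X, 𝕜)} (hg : ∀ x, g x = H (c + v x) x) :
    HasSum (fun j => v ^ j * p.coeff j) g := by
  have hsummable : Summable fun j => v ^ j * p.coeff j := by
    refine .of_norm_bounded (p.summable_norm_mul_pow (hv.trans_le hH.r_le)) fun j => ?_
    refine (ContinuousMap.norm_le _ (by positivity)).mpr fun x => ?_
    calc ‖(v ^ j * p.coeff j) x‖ = ‖p.coeff j x‖ * ‖v x‖ ^ j := by
          rw [ContinuousMap.mul_apply, ContinuousMap.pow_apply, norm_mul, norm_pow, mul_comm]
      _ ≤ ‖p.coeff j‖ * ‖v‖ ^ j := by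
          gcongr
          exacts [(p.coeff j).norm_coe_le_norm x, v.norm_coe_le_norm x]
      _ = ‖p j‖ * ‖v‖₊ ^ j := by
          rw [FormalMultilinearSeries.norm_apply_eq_norm_coef, coe_nnnorm]
  have heval : ∀ x, HasSum (fun j => (v ^ j * p.coeff j) x) (g x) := by
    intro x
    have hvx : v x ∈ Metric.eball (0 : 𝕜) r := by
      rw [mem_eball_zero_iff]
      exact (ENNReal.coe_le_coe.mpr (v.norm_coe_le_norm x)).trans_lt hv
    have hx := (hH.hasSum hvx).mapL (ContinuousMap.evalCLM 𝕜 x)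
    simpa only [FormalMultilinearSeries.apply_eq_pow_smul_coeff, map_smul, smul_eq_mul,
      ContinuousMap.evalCLM_apply, ← hg, ContinuousMap.mul_apply, ContinuousMap.pow_apply] using hx
  have htsum : ∑' j, v ^ j * p.coeff j = g := by
    ext x
    rw [← ContinuousMap.tsum_apply hsummable, (heval x).tsum_eq]
  exact htsum ▸ hsummable.hasSum

variable {W : Subalgebra ℂ C(X, ℂ)}

lemma mem_of_apply_eq_family_apply (hW : IsClosed (W : Set C(X, ℂ))) {H : ℂ → C(X, ℂ)}
    {c : ℂ} {ρ : ℝ} (hH : DifferentiableOn ℂ H (Metric.ball c ρ))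
    (hHW : ∀ s ∈ Metric.ball c ρ, H s ∈ W) {u : C(X, ℂ)} (hu : u ∈ W)
    (huc : ‖u - algebraMap ℂ C(X, ℂ) c‖ < ρ) {g : C(X, ℂ)} (hg : ∀ x, g x = H (u x) x) :
    g ∈ W := by
  obtain ⟨R, huR, hRρ⟩ := exists_between huc
  have hR : 0 < R := (norm_nonneg _).trans_lt huR
  lift R to NNReal using hR.le
  have hseries := (hH.mono (Metric.closedBall_subset_ball hRρ)).hasFPowerSeriesOnBall
    (NNReal.coe_pos.mp hR)
  have hcoeff : ∀ j, (cauchyPowerSeries H c R).coeff j ∈ W :=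
    coeff_mem_of_eventually_mem (W := Subalgebra.toSubmodule W) hW hseries.hasFPowerSeriesAt
      (eventually_of_mem (Metric.ball_mem_nhds c (hR.trans hRρ)) hHW)
  have hsum := hasSum_pow_mul_coeff hseries (v := u - algebraMap ℂ C(X, ℂ) c)
    (ENNReal.coe_lt_coe.mpr huR) (g := g) (by simpa using hg)
  exact hW.mem_of_tendsto hsum <| .of_forall fun s => W.sum_mem fun j _ =>
    W.mul_mem (W.pow_mem (W.sub_mem hu (W.algebraMap_mem c)) j) (hcoeff j)

variable {ι : Type*} [Fintype ι] {c : ι → ℂ} {ρ : ℝ} {f : (ι → ℂ) → ℂ}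

lemma update_mem_ball [DecidableEq ι] {ζ : ι → ℂ} (hζ : ζ ∈ Metric.ball c ρ) {k : ι} {s : ℂ}
    (hs : s ∈ Metric.ball (c k) ρ) : Function.update ζ k s ∈ Metric.ball c ρ := by
  have hρ : 0 < ρ := Metric.pos_of_mem_ball hζ
  rw [ball_pi c hρ] at hζ ⊢
  exact (update_mem_pi_iff_of_mem hζ).mpr fun _ => hs

lemma mem_of_apply_eq_comp_update [DecidableEq ι] (hW : IsClosed (W : Set C(X, ℂ)))
    (hf : DifferentiableOn ℂ f (Metric.ball c ρ)) {b : C(X, ι → ℂ)}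
    (hb : ∀ x, b x ∈ Metric.ball c ρ) {k : ι}
    (hbW : ∀ s ∈ Metric.ball (c k) ρ, ∀ g : C(X, ℂ),
      (∀ x, g x = f (Function.update (b x) k s)) → g ∈ W)
    {u : C(X, ℂ)} (hu : u ∈ W) (huc : ‖u - algebraMap ℂ C(X, ℂ) (c k)‖ < ρ)
    {g : C(X, ℂ)} (hg : ∀ x, g x = f (Function.update (b x) k (u x))) : g ∈ W := by
  obtain ⟨H, hH, hHf⟩ := exists_differentiableOn_continuousMap_comp hf
    (Metric.isOpen_ball (x := c k) (ε := ρ))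
    (m := fun s x => Function.update (b x) k s)
    ((b.continuous.comp continuous_snd).update k continuous_fst)
    (fun x s => (hasFDerivAt_update (𝕜 := ℂ) (b x) s).differentiableAt)
    fun s hs x => update_mem_ball (hb x) hs
  have hu_mem : ∀ x, u x ∈ Metric.ball (c k) ρ := fun x =>
    mem_ball_iff_norm.mpr (((u - algebraMap ℂ C(X, ℂ) (c k)).norm_coe_le_norm x).trans_lt huc)
  exact mem_of_apply_eq_family_apply hW hH (fun s hs => hbW s hs _ (hHf s hs)) hu huc
    fun x => by rw [hg, hHf _ (hu_mem x)]

variable {u : ι → C(X, ℂ)}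

lemma mem_of_apply_eq_comp_piecewise [DecidableEq ι] (hW : IsClosed (W : Set C(X, ℂ)))
    (hu : ∀ i, u i ∈ W) (huc : ∀ i, ‖u i - algebraMap ℂ C(X, ℂ) (c i)‖ < ρ)
    (hf : DifferentiableOn ℂ f (Metric.ball c ρ)) (S : Finset ι) {ζ : ι → ℂ}
    (hζ : ζ ∈ Metric.ball c ρ) {g : C(X, ℂ)}
    (hg : ∀ x, g x = f (S.piecewise (fun i => u i x) ζ)) : g ∈ W := by
  -- Coordinates outside `S` are frozen at `ζ`; to free coordinate `k`, the induction hypothesis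
  -- is applied with `ζ k` replaced by every `s` in the disc.
  induction S using Finset.induction_on generalizing ζ g with
  | empty =>
    have hconst : g = algebraMap ℂ C(X, ℂ) (f ζ) := by
      ext x
      simp [hg]
    exact hconst ▸ W.algebraMap_mem _
  | insert k S hk ih =>
    have hcont : Continuous fun x => S.piecewise (fun i => u i x) ζ := by
      refine continuous_pi fun i => ?_
      by_cases hi : i ∈ S
      · simpa only [S.piecewise_eq_of_mem _ _ hi] using (u i).continuous
      · simpa only [S.piecewise_eq_of_notMem _ _ hi] using continuous_const
    have hmem : ∀ x, S.piecewise (fun i => u i x) ζ ∈ Metric.ball c ρ := by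
      intro x
      have hρ : 0 < ρ := Metric.pos_of_mem_ball hζ
      rw [ball_pi c hρ] at hζ ⊢
      refine S.piecewise_mem_set_pi (fun i _ => mem_ball_iff_norm.mpr ?_) hζ
      exact ((u i - algebraMap ℂ C(X, ℂ) (c i)).norm_coe_le_norm x).trans_lt (huc i)
    refine mem_of_apply_eq_comp_update hW hf (b := ⟨_, hcont⟩) hmem (fun s hs g' hg' => ?_)
      (hu k) (huc k) fun x => ?_
    · refine ih (update_mem_ball hζ hs) fun x => ?_
      rw [hg', ContinuousMap.coe_mk, Finset.update_piecewise_of_notMem _ _ _ hk]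
    · rw [hg, ContinuousMap.coe_mk, Finset.piecewise_insert]

lemma mem_of_apply_eq_comp_of_norm_sub_lt (hW : IsClosed (W : Set C(X, ℂ)))
    (hu : ∀ i, u i ∈ W) (huc : ∀ i, ‖u i - algebraMap ℂ C(X, ℂ) (c i)‖ < ρ) (hρ : 0 < ρ)
    (hf : DifferentiableOn ℂ f (Metric.ball c ρ)) {g : C(X, ℂ)}
    (hg : ∀ x, g x = f fun i => u i x) : g ∈ W := by
  classical
  exact mem_of_apply_eq_comp_piecewise hW hu huc hf Finset.univ (Metric.mem_ball_self hρ)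
    fun x => by rw [hg, Finset.piecewise_univ]

end HolomorphicFunctionalCalculus

section PolynomialClosure

variable {ι : Type*} {L : Set (ι → ℂ)}

/-- The `i`-th coordinate function on `L ⊆ ℂ^ι`, a generator of the algebra of polynomial
functions on `L`. -/
def coordinateMap (L : Set (ι → ℂ)) (i : ι) : C(L, ℂ) :=
  (ContinuousMap.eval i).restrict L

/-- The uniform algebra `P(L)`: the closure in `C(L)` of the restrictions to `L` of the
holomorphic polynomials. -/
def polynomialClosure (L : Set (ι → ℂ)) [CompactSpace L] : Subalgebra ℂ C(L, ℂ) :=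
  (MvPolynomial.aeval (R := ℂ) (coordinateMap L)).range.topologicalClosure

variable [CompactSpace L]

lemma isClosed_polynomialClosure : IsClosed (polynomialClosure L : Set C(L, ℂ)) :=
  Subalgebra.isClosed_topologicalClosure _

lemma coordinateMap_mem_polynomialClosure (i : ι) : coordinateMap L i ∈ polynomialClosure L :=
  Subalgebra.le_topologicalClosure _
    ((AlgHom.mem_range _).mpr ⟨MvPolynomial.X i, MvPolynomial.aeval_X _ i⟩)

lemma exists_norm_sub_eval_lt_of_mem_polynomialClosure {g : C(L, ℂ)}
    (hg : g ∈ polynomialClosure L) {ε : ℝ} (hε : 0 < ε) :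
    ∃ Q : MvPolynomial ι ℂ, ∀ z : L, ‖g z - MvPolynomial.eval z.1 Q‖ < ε := by
  rw [polynomialClosure, ← SetLike.mem_coe, Subalgebra.topologicalClosure_coe] at hg
  obtain ⟨_, ⟨Q, rfl⟩, hQ⟩ := Metric.mem_closure_iff.mp hg ε hε
  refine ⟨Q, fun z => ?_⟩
  have heval : MvPolynomial.aeval (coordinateMap L) Q z = MvPolynomial.eval z.1 Q :=
    MvPolynomial.comp_aeval_apply (coordinateMap L) (ContinuousMap.evalAlgHom ℂ ℂ z) Q
  rw [← heval, ← dist_eq_norm]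
  exact (ContinuousMap.dist_apply_le_dist z).trans_lt hQ

end PolynomialClosure

section Dilations

lemma isOpen_setOf_forall_lineMap_mem {F : Type*} [NormedAddCommGroup F] [NormedSpace ℂ F]
    {Ω L : Set F} (hΩ : IsOpen Ω) (hL : IsCompact L) (x₀ : F) :
    IsOpen {t : ℂ | ∀ z ∈ L, AffineMap.lineMap x₀ z t ∈ Ω} := by
  refine isOpen_iff_eventually.mpr fun t ht =>
    hL.eventually_forall_of_forall_eventually fun z hz => ?_
  have hcont : Continuous fun p : ℂ × F => AffineMap.lineMap x₀ p.2 p.1 := by fun_prop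
  exact hcont.continuousAt.eventually (hΩ.mem_nhds (ht z hz))

lemma lineMap_mem_of_mem_segment {F : Type*} [AddCommGroup F] [Module ℂ F] {Ω : Set F}
    {x₀ z : F} (hΩ : StarConvex ℝ x₀ Ω) (hz : z ∈ Ω) {t : ℂ} (ht : t ∈ segment ℝ (0 : ℂ) 1) :
    AffineMap.lineMap x₀ z t ∈ Ω := by
  obtain ⟨r, ⟨hr0, hr1⟩, rfl⟩ := (segment_eq_image ℝ (0 : ℂ) 1).subset ht
  simpa [AffineMap.lineMap_apply_module', add_comm] using hΩ.add_smul_sub_mem hz hr0 hr1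

variable {ι : Type*} [Finite ι] {Ω L : Set (ι → ℂ)} {f : (ι → ℂ) → ℂ}

lemma eventually_mem_polynomialClosure_of_apply_eq_comp_lineMap [CompactSpace L]
    {x₀ : ι → ℂ} (hΩ : Ω ∈ 𝓝 x₀) (hf : DifferentiableOn ℂ f Ω) {G : ℂ → C(L, ℂ)}
    (hG : ∀ᶠ t in 𝓝 0, ∀ z : L, G t z = f (AffineMap.lineMap x₀ z.1 t)) :
    ∀ᶠ t in 𝓝 0, G t ∈ polynomialClosure L := by
  cases nonempty_fintype ι
  obtain ⟨ρ, hρ, hρΩ⟩ := Metric.mem_nhds_iff.mp hΩ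
  let v : ι → C(L, ℂ) := fun i => coordinateMap L i - algebraMap ℂ C(L, ℂ) (x₀ i)
  have hv : ∀ i, v i ∈ polynomialClosure L := fun i =>
    sub_mem (coordinateMap_mem_polynomialClosure i) (algebraMap_mem _ _)
  have hsmall : ∀ᶠ t in 𝓝 (0 : ℂ), ∀ i, ‖t • v i‖ < ρ := by
    refine eventually_all.mpr fun i => ?_
    have hcont : Continuous fun t : ℂ => ‖t • v i‖ := by fun_prop
    exact hcont.continuousAt.eventually_lt continuousAt_const (by simpa using hρ)
  filter_upwards [hsmall, hG] with t ht hGt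
  refine mem_of_apply_eq_comp_of_norm_sub_lt isClosed_polynomialClosure (c := x₀)
    (u := fun i => t • v i + algebraMap ℂ C(L, ℂ) (x₀ i))
    (fun i => add_mem (Subalgebra.smul_mem _ (hv i) t) (algebraMap_mem _ _))
    (fun i => by simpa only [add_sub_cancel_right] using ht i) hρ (hf.mono hρΩ) fun z => ?_
  rw [hGt, AffineMap.lineMap_apply_module']
  rfl

lemma mem_polynomialClosure_of_starConvex [CompactSpace L] {x₀ : ι → ℂ} (hΩo : IsOpen Ω)
    (hΩ : StarConvex ℝ x₀ Ω) (hx₀ : x₀ ∈ Ω) (hf : DifferentiableOn ℂ f Ω) (hL : L ⊆ Ω)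
    {g : C(L, ℂ)} (hg : ∀ z : L, g z = f z) : g ∈ polynomialClosure L := by
  cases nonempty_fintype ι
  let V : Set ℂ := {t | ∀ z ∈ L, AffineMap.lineMap x₀ z t ∈ Ω}
  have hVo : IsOpen V :=
    isOpen_setOf_forall_lineMap_mem hΩo (isCompact_iff_compactSpace.mpr ‹_›) x₀
  have hsegment : segment ℝ (0 : ℂ) 1 ⊆ V := fun t ht z hz =>
    lineMap_mem_of_mem_segment hΩ (hL hz) ht
  obtain ⟨G, hG, hGf⟩ := exists_differentiableOn_continuousMap_comp hf hVo
    (m := fun t (z : L) => AffineMap.lineMap x₀ z.1 t) (by fun_prop)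
    (fun z => by simp only [AffineMap.lineMap_apply_module']; fun_prop)
    fun t ht z => ht z z.2
  have hGnear : ∀ᶠ t in 𝓝 0, G t ∈ polynomialClosure L :=
    eventually_mem_polynomialClosure_of_apply_eq_comp_lineMap (hΩo.mem_nhds hx₀) hf
      (eventually_of_mem (hVo.mem_nhds (hsegment (left_mem_segment ℝ 0 1))) hGf)
  have hG1 : G 1 ∈ polynomialClosure L :=
    mem_of_eventually_mem_of_isPreconnected (W := (polynomialClosure L).toSubmodule)
      isClosed_polynomialClosure ((hG.analyticOnNhd hVo).mono hsegment)
      (convex_segment (𝕜 := ℝ) 0 1).isPreconnected (left_mem_segment ℝ 0 1) hGnear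
      (right_mem_segment ℝ 0 1)
  have hgG : g = G 1 := by
    ext z
    rw [hg, hGf 1 (hsegment (right_mem_segment ℝ 0 1)), AffineMap.lineMap_apply_one]
  exact hgG ▸ hG1

end Dilations

theorem polynomials_dense_in_O_of_convex_general {ι : Type*} [Finite ι] {Ω : Set (ι → ℂ)}
    (hΩo : IsOpen Ω) {x₀ : ι → ℂ} (hΩ : StarConvex ℝ x₀ Ω) {f : (ι → ℂ) → ℂ}
    (hf : DifferentiableOn ℂ f Ω) {L : Set (ι → ℂ)} (hLcpt : IsCompact L) (hLsub : L ⊆ Ω)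
    {ε : ℝ} (hε : 0 < ε) :
    ∃ Q : MvPolynomial ι ℂ, ∀ z ∈ L, ‖f z - MvPolynomial.eval z Q‖ < ε := by
  rcases L.eq_empty_or_nonempty with rfl | hLne
  · exact ⟨0, by simp⟩
  have : CompactSpace L := isCompact_iff_compactSpace.mp hLcpt
  have hfL : (⟨L.domRestrict f, (hf.continuousOn.mono hLsub).domRestrict⟩ : C(L, ℂ)) ∈
      polynomialClosure L :=
    mem_polynomialClosure_of_starConvex hΩo hΩ (hΩ.mem (hLne.mono hLsub)) hf hLsub fun _ => rfl
  obtain ⟨Q, hQ⟩ := exists_norm_sub_eval_lt_of_mem_polynomialClosure hfL hε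
  exact ⟨Q, fun z hz => hQ ⟨z, hz⟩⟩

/-- polynomials are dense in `O(Ω)` for convex open `Ω`, for the topology of
uniform convergence on compact sets. -/
theorem polynomials_dense_in_O_of_convex (n : ℕ) (Ω : Set (Fin n → ℂ))
    (hΩo : IsOpen Ω) (hΩcv : Convex ℝ Ω)
    (f : (Fin n → ℂ) → ℂ) (hf : DifferentiableOn ℂ f Ω)
    (L : Set (Fin n → ℂ)) (hLcpt : IsCompact L) (hLsub : L ⊆ Ω)
    (ε : ℝ) (hε : 0 < ε) :
    ∃ Q : MvPolynomial (Fin n) ℂ, ∀ z ∈ L, ‖f z - mvEval Q z‖ < ε := by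
  rcases Ω.eq_empty_or_nonempty with rfl | ⟨x₀, hx₀⟩
  · exact ⟨0, fun z hz => (hLsub hz).elim⟩
  · exact polynomials_dense_in_O_of_convex_general hΩo (hΩcv.starConvex hx₀) hf hLcpt hLsub hε

end
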